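/- For every β ∈ [1,2), G(β) ≤ −log₂(1.236). (Consequently q(n) ≥ 1.236^{n−o(n)} for every n ∈ ℕ.) -/

import Mathlib

/-- The binary entropy function, `h(p) = p log₂(1/p) + (1-p) log₂(1/(1-p))`,
with the convention `h(0) = h(1) = 0` (automatic since `1/0 = 0` and `logb 2 0 = 0`). -/
noncomputable def binH (p : ℝ) : ℝ :=
  p * Real.logb 2 (1 / p) + (1 - p) * Real.logb 2 (1 / (1 - p))

/-- `(c, b) ∈ C(β)`: `c : ℕ → [0,1]`, `∑ cᵢ/2ⁱ = 1/(β·2ᵇ)` and `∑ cᵢ ≤ 1`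
(the latter expressed via partial sums, which is equivalent for nonnegative terms). -/
def memC (β : ℝ) (c : ℕ → ℝ) (b : ℕ) : Prop :=
  (∀ i, c i ∈ Set.Icc (0 : ℝ) 1) ∧
  (∑' i : ℕ, c i / 2 ^ i) = 1 / (β * 2 ^ b) ∧
  ∀ n : ℕ, (∑ i ∈ Finset.range n, c i) ≤ 1

/-- `α ∈ A(c,b)`: `α : ℕ → [0,1]` with `∑ αᵢ cᵢ / 2ⁱ = 1/(β·2^{b+1})`. -/
def memA (β : ℝ) (b : ℕ) (c α : ℕ → ℝ) : Prop :=
  (∀ i, α i ∈ Set.Icc (0 : ℝ) 1) ∧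
  (∑' i : ℕ, α i * c i / 2 ^ i) = 1 / (β * 2 ^ (b + 1))

/-- `P(c,α) = ∑ h(αᵢ)·cᵢ − h(∑ αᵢ·cᵢ)`. -/
noncomputable def Pfun (c α : ℕ → ℝ) : ℝ :=
  (∑' i : ℕ, binH (α i) * c i) - binH (∑' i : ℕ, α i * c i)

/-- `sup_{α ∈ A(c,b)} P(c,α)`. -/
noncomputable def supP (β : ℝ) (b : ℕ) (c : ℕ → ℝ) : ℝ :=
  sSup {y | ∃ α, memA β b c α ∧ y = Pfun c α}

/-- `G(β) = inf_{(c,b) ∈ C(β)} sup_{α ∈ A(c,b)} P(c,α)`. -/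
noncomputable def Gfun (β : ℝ) : ℝ :=
  sInf {y | ∃ c b, memC β c b ∧ y = supP β b c}

/-!
The quantity `∑ h(αᵢ) cᵢ - h(∑ αᵢ cᵢ)` is minus a mutual information: pick an index `i` with
probability `cᵢ`, or no index with the remaining probability, and then a bit which is `1` with
probability `αᵢ` (and `0` if there is no index). By Gibbs' inequality (here Jensen's inequality for
`negMulLog`) it is therefore bounded above in terms of any conditional distributions `r(· | 1)` and
`r(· | 0)` of the index given the bit.

Choose `t ∈ [1/4, 1/2]` with `1 / (β 2^b) = t / 2^k`, and let `c` be supported on `{k, k + 1}` with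
values `y, x`, where `y + x / 2 = t`. For `t ≥ 3/10` take `x = 0`: then `αₖ = 1/2` is forced and
the quantity equals `t - h(t / 2)`, which is convex in `t`, so only the end points matter. For
`t ≤ 3/10` take `x + φ y = 1/2`, where `φ` is the golden ratio, and
`r(· | 1) = (2 φ y, 2 x, 0)`, `r(· | 0) = (2 φ⁻³ y, 2 φ⁻² x, 2 φ⁻¹ (1 - y - x))`; under the
constraint on `α` the resulting bound is the constant `log₂ (φ / 2)`.
-/

section Entropy

open Real
open scoped goldenRatio

/-- Gibbs' inequality for the probability distributions proportional to `w i * a i` and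
`w i * k i`. -/
theorem sum_mul_negMulLog_le {ι : Type*} {s : Finset ι} {w a k : ι → ℝ} (hw : ∀ i ∈ s, 0 ≤ w i)
    (ha : ∀ i ∈ s, 0 ≤ a i) (hk : ∀ i ∈ s, 0 < k i) (hwk : ∑ i ∈ s, w i * k i = 1) :
    ∑ i ∈ s, w i * negMulLog (a i) ≤
      negMulLog (∑ i ∈ s, w i * a i) - ∑ i ∈ s, w i * a i * log (k i) := by
  have hjensen := concaveOn_negMulLog.le_map_sum (t := s) (w := fun i => w i * k i)
    (p := fun i => a i / k i) (fun i hi => mul_nonneg (hw i hi) (hk i hi).le) hwk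
    (fun i hi => div_nonneg (ha i hi) (hk i hi).le)
  have hterm : ∀ i ∈ s, (w i * k i) • negMulLog (a i / k i) =
      w i * negMulLog (a i) + w i * a i * log (k i) := fun i hi => by
    have hki := (hk i hi).ne'
    rw [div_eq_mul_inv, negMulLog_mul, negMulLog, negMulLog, log_inv, smul_eq_mul]
    field_simp
  have hmean : ∀ i ∈ s, (w i * k i) • (a i / k i) = w i * a i := fun i hi => by
    rw [smul_eq_mul, mul_assoc, mul_div_cancel₀ _ (hk i hi).ne']
  rw [Finset.sum_congr rfl hterm, Finset.sum_congr rfl hmean, Finset.sum_add_distrib] at hjensen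
  linarith

theorem inv_goldenRatio_eq_sub_one : φ⁻¹ = φ - 1 := by
  rw [inv_goldenRatio, ← one_sub_goldenConj, neg_sub]

theorem goldenRatio_mem_Icc : φ ∈ Set.Icc (1.618 : ℝ) 1.6181 := by
  have hpos := goldenRatio_pos
  have hsq := goldenRatio_sq
  constructor <;> nlinarith

theorem logb_goldenRatio_div_two_le : logb 2 (φ / 2) ≤ -logb 2 1.236 := by
  rw [← logb_inv]
  have hratio : φ / 2 ≤ 1.236⁻¹ := calc
    φ / 2 ≤ 1.6181 / 2 := by linarith [goldenRatio_mem_Icc.2]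
    _ ≤ 1.236⁻¹ := by norm_num
  exact logb_le_logb_of_le one_lt_two (half_pos goldenRatio_pos) hratio

variable {x y a₀ a₁ : ℝ}

theorem negMulLog_mixture_le (hx : 0 ≤ x) (hy : 0 ≤ y) (hφ : x + φ * y = 1 / 2)
    (h₀ : 0 ≤ a₀) (h₁ : 0 ≤ a₁) :
    negMulLog a₀ * y + negMulLog a₁ * x ≤ negMulLog (a₀ * y + a₁ * x) -
      ((log 2 + log φ) * (a₀ * y) + log 2 * (a₁ * x)) := by
  have hpos := goldenRatio_pos
  have hsum : y * (2 * φ) + x * 2 = 1 := by linear_combination 2 * hφ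
  have hgibbs := sum_mul_negMulLog_le (s := Finset.univ) (w := ![y, x]) (a := ![a₀, a₁])
    (k := ![2 * φ, 2]) (by simp [Fin.forall_fin_two, *]) (by simp [Fin.forall_fin_two, *])
    (by simp [Fin.forall_fin_two, *]) (by simpa [Fin.sum_univ_two] using hsum)
  simp only [Fin.sum_univ_two, Matrix.cons_val_zero, Matrix.cons_val_one] at hgibbs
  rw [log_mul two_ne_zero hpos.ne', mul_comm y a₀, mul_comm x a₁] at hgibbs
  linarith

theorem negMulLog_mixture_compl_le (hx : 0 ≤ x) (hy : 0 ≤ y) (hyx : y + x ≤ 1)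
    (hφ : x + φ * y = 1 / 2) (h₀ : 0 ≤ a₀) (h₁ : 0 ≤ a₁) :
    negMulLog a₀ * y + negMulLog a₁ * x ≤ negMulLog (a₀ * y + a₁ * x + (1 - y - x)) -
      ((log 2 - 3 * log φ) * (a₀ * y) + (log 2 - 2 * log φ) * (a₁ * x) +
        (log 2 - log φ) * (1 - y - x)) := by
  have hpos (n : ℕ) : 0 < φ⁻¹ ^ n := pow_pos (inv_pos.2 goldenRatio_pos) n
  have hrest : 0 ≤ 1 - y - x := by linarith
  have hsum : y * (2 * φ⁻¹ ^ 3) + x * (2 * φ⁻¹ ^ 2) + (1 - y - x) * (2 * φ⁻¹) = 1 := by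
    have hsq : φ⁻¹ ^ 2 = 2 - φ := by
      rw [inv_goldenRatio_eq_sub_one]
      linear_combination goldenRatio_sq
    have hcube : φ⁻¹ ^ 3 = 2 * φ - 3 := by
      rw [pow_succ, hsq, inv_goldenRatio_eq_sub_one]
      linear_combination -goldenRatio_sq
    rw [hcube, hsq, inv_goldenRatio_eq_sub_one]
    linear_combination (6 - 4 * φ) * hφ + 4 * y * goldenRatio_sq
  have hlog (n : ℕ) : log (2 * φ⁻¹ ^ n) = log 2 - n * log φ := by
    rw [log_mul two_ne_zero (hpos n).ne', log_pow, log_inv]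
    ring
  have hgibbs := sum_mul_negMulLog_le (s := Finset.univ) (w := ![y, x, 1 - y - x])
    (a := ![a₀, a₁, 1]) (k := ![2 * φ⁻¹ ^ 3, 2 * φ⁻¹ ^ 2, 2 * φ⁻¹ ^ 1])
    (by simp [Fin.forall_fin_succ, *]) (by simp [Fin.forall_fin_succ, *])
    (fun i _ => by fin_cases i <;> exact mul_pos two_pos (hpos _))
    (by simpa [Fin.sum_univ_three] using hsum)
  simp only [Fin.sum_univ_three, Matrix.cons_val, hlog] at hgibbs
  rw [negMulLog_one, mul_comm y a₀, mul_comm x a₁, mul_one] at hgibbs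
  push_cast at hgibbs
  linarith

theorem binEntropy_mixture_le (hx : 0 ≤ x) (hy : 0 ≤ y) (hyx : y + x ≤ 1)
    (hφ : x + φ * y = 1 / 2) (h₀ : a₀ ∈ Set.Icc (0 : ℝ) 1) (h₁ : a₁ ∈ Set.Icc (0 : ℝ) 1)
    (ha : a₀ * y + a₁ * x / 2 = (y + x / 2) / 2) :
    binEntropy a₀ * y + binEntropy a₁ * x - binEntropy (a₀ * y + a₁ * x) ≤ log (φ / 2) := by
  have hone := negMulLog_mixture_le hx hy hφ h₀.1 h₁.1
  have hzero := negMulLog_mixture_compl_le hx hy hyx hφ (sub_nonneg.2 h₀.2) (sub_nonneg.2 h₁.2)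
  have hcompl : (1 - a₀) * y + (1 - a₁) * x + (1 - y - x) = 1 - (a₀ * y + a₁ * x) := by ring
  rw [hcompl] at hzero
  rw [log_div goldenRatio_ne_zero two_ne_zero]
  simp only [binEntropy_eq_negMulLog_add_negMulLog_one_sub]
  linear_combination hone + hzero - 4 * log φ * ha

theorem convexOn_two_mul_log_two_sub_binEntropy :
    ConvexOn ℝ (Set.Icc 0 1) fun p => 2 * p * log 2 - binEntropy p := by
  have hlin : ConvexOn ℝ (Set.Icc (0 : ℝ) 1) fun p => 2 * p * log 2 :=
    ((convexOn_id (convex_Icc 0 1)).smul (by positivity : 0 ≤ 2 * log 2)).congr fun p _ => by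
      simp only [id, smul_eq_mul]
      ring
  exact hlin.sub strictConcave_binEntropy.concaveOn

theorem binEntropy_div {m n : ℝ} (hm : 0 < m) (hmn : m < n) :
    binEntropy (m / n) = log n - (m * log m + (n - m) * log (n - m)) / n := by
  have hn : n ≠ 0 := (hm.trans hmn).ne'
  rw [binEntropy, one_sub_div hn, log_inv, log_inv, log_div hm.ne' hn,
    log_div (sub_pos.2 hmn).ne' hn]
  field_simp
  ring

theorem two_mul_log_two_sub_binEntropy_le {p : ℝ} (hp : p ∈ Set.Icc (3 / 20 : ℝ) (1 / 4)) :
    2 * p * log 2 - binEntropy p ≤ log (φ / 2) := by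
  have hφ : log 0.809 ≤ log (φ / 2) :=
    log_le_log (by norm_num) (by linarith [goldenRatio_mem_Icc.1])
  have hleft : 2 * (3 / 20) * log 2 - binEntropy (3 / 20) ≤ log 0.809 := by
    have hpow : log (2 ^ 6 * 3 ^ 3 * 17 ^ 17) ≤ log (20 ^ 20 * 0.809 ^ 20) :=
      log_le_log (by norm_num) (by norm_num)
    rw [log_mul (by norm_num) (by norm_num), log_mul (by norm_num) (by norm_num),
      log_mul (by norm_num) (by norm_num)] at hpow
    simp only [log_pow, Nat.cast_ofNat] at hpow
    rw [binEntropy_div (by norm_num) (by norm_num), show (20 - 3 : ℝ) = 17 by norm_num]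
    linarith
  have hright : 2 * (1 / 4) * log 2 - binEntropy (1 / 4) ≤ log 0.809 := by
    have hpow : log (2 ^ 2 * 3 ^ 3) ≤ log (4 ^ 4 * 0.809 ^ 4) :=
      log_le_log (by norm_num) (by norm_num)
    rw [log_mul (by norm_num) (by norm_num), log_mul (by norm_num) (by norm_num)] at hpow
    simp only [log_pow, Nat.cast_ofNat] at hpow
    rw [binEntropy_div (by norm_num) (by norm_num), show (4 - 1 : ℝ) = 3 by norm_num, log_one]
    linarith
  exact (convexOn_two_mul_log_two_sub_binEntropy.le_max_of_mem_Icc (by norm_num) (by norm_num)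
    hp).trans ((max_le hleft hright).trans hφ)

end Entropy

section Gfun

variable {β : ℝ} {b : ℕ} {c : ℕ → ℝ}

theorem binH_eq_binEntropy_div_log_two (p : ℝ) : binH p = Real.binEntropy p / Real.log 2 := by
  simp only [binH, Real.binEntropy, Real.logb, one_div]
  ring

theorem binH_mem_Icc {p : ℝ} (hp : p ∈ Set.Icc (0 : ℝ) 1) : binH p ∈ Set.Icc (0 : ℝ) 1 := by
  have hlog : 0 < Real.log 2 := Real.log_pos one_lt_two
  rw [binH_eq_binEntropy_div_log_two]
  exact ⟨div_nonneg (Real.binEntropy_nonneg hp.1 hp.2) hlog.le,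
    (div_le_one hlog).2 Real.binEntropy_le_log_two⟩

theorem memC.tsum_mul_mem_Icc (hc : memC β c b) {α : ℕ → ℝ}
    (hα : ∀ i, α i ∈ Set.Icc (0 : ℝ) 1) : ∑' i, α i * c i ∈ Set.Icc (0 : ℝ) 1 := by
  have hnonneg (i : ℕ) : 0 ≤ α i * c i := mul_nonneg (hα i).1 (hc.1 i).1
  refine ⟨tsum_nonneg hnonneg, Real.tsum_le_of_sum_range_le hnonneg fun n => ?_⟩
  exact (Finset.sum_le_sum fun i _ => mul_le_of_le_one_left (hc.1 i).1 (hα i).2).trans (hc.2.2 n)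

theorem memC.Pfun_mem_Icc (hc : memC β c b) {α : ℕ → ℝ}
    (hα : ∀ i, α i ∈ Set.Icc (0 : ℝ) 1) : Pfun c α ∈ Set.Icc (-1 : ℝ) 1 := by
  obtain ⟨hsum₀, hsum₁⟩ := hc.tsum_mul_mem_Icc fun i => binH_mem_Icc (hα i)
  obtain ⟨hmix₀, hmix₁⟩ := binH_mem_Icc (hc.tsum_mul_mem_Icc hα)
  constructor <;> unfold Pfun <;> linarith

theorem memC.memA_half (hc : memC β c b) : memA β b c fun _ => 1 / 2 := by
  refine ⟨fun _ => by norm_num, ?_⟩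
  simp only [mul_div_assoc]
  rw [tsum_mul_left, hc.2.1, pow_succ]
  ring

theorem memC.neg_one_le_supP (hc : memC β c b) : -1 ≤ supP β b c := by
  have hbdd : BddAbove {y | ∃ α, memA β b c α ∧ y = Pfun c α} := by
    refine ⟨1, ?_⟩
    rintro _ ⟨α, hα, rfl⟩
    exact (hc.Pfun_mem_Icc hα.1).2
  exact (hc.Pfun_mem_Icc hc.memA_half.1).1.trans (le_csSup hbdd ⟨_, hc.memA_half, rfl⟩)

theorem memC.Gfun_le {M : ℝ} (hc : memC β c b) (hM : ∀ α, memA β b c α → Pfun c α ≤ M) :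
    Gfun β ≤ M := by
  have hbdd : BddBelow {y | ∃ c b, memC β c b ∧ y = supP β b c} := by
    refine ⟨-1, ?_⟩
    rintro _ ⟨c, b, hc, rfl⟩
    exact hc.neg_one_le_supP
  refine (csInf_le hbdd ⟨c, b, hc, rfl⟩).trans (csSup_le ⟨_, _, hc.memA_half, rfl⟩ ?_)
  rintro _ ⟨α, hα, rfl⟩
  exact hM α hα

end Gfun

section TwoLevel

/-- The sequence supported on `{k, k + 1}` with values `y` at `k` and `x` at `k + 1`, used as a
test sequence `c` for `Gfun`. -/
noncomputable def twoLevel (k : ℕ) (y x : ℝ) : ℕ → ℝ :=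
  Pi.single k y + Pi.single (k + 1) x

variable {β y x : ℝ} {b k : ℕ}

theorem hasSum_mul_twoLevel (k : ℕ) (y x : ℝ) (g : ℕ → ℝ) :
    HasSum (fun i => g i * twoLevel k y x i) (g k * y + g (k + 1) * x) := by
  convert (hasSum_pi_single k (g k * y)).add (hasSum_pi_single (k + 1) (g (k + 1) * x)) using 2
    with i
  rw [twoLevel, Pi.add_apply]
  grind

theorem tsum_mul_twoLevel_div_two_pow (k : ℕ) (y x : ℝ) (g : ℕ → ℝ) :
    ∑' i, g i * twoLevel k y x i / 2 ^ i = (g k * y + g (k + 1) * x / 2) / 2 ^ k := by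
  have h := (hasSum_mul_twoLevel k y x fun i => g i / 2 ^ i).tsum_eq
  simp only [div_mul_eq_mul_div] at h
  rw [h, pow_succ]
  field_simp

theorem memC_twoLevel (hy : 0 ≤ y) (hx : 0 ≤ x) (hyx : y + x ≤ 1)
    (h : (y + x / 2) / 2 ^ k = 1 / (β * 2 ^ b)) : memC β (twoLevel k y x) b := by
  have hnonneg : 0 ≤ twoLevel k y x := add_nonneg (Pi.single_nonneg.2 hy) (Pi.single_nonneg.2 hx)
  have hsum (n : ℕ) : ∑ i ∈ Finset.range n, twoLevel k y x i ≤ 1 := by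
    have htotal : HasSum (twoLevel k y x) (y + x) := by
      simpa using hasSum_mul_twoLevel k y x 1
    exact (sum_le_hasSum _ (fun i _ => hnonneg i) htotal).trans hyx
  refine ⟨fun i => ⟨hnonneg i, ?_⟩, ?_, hsum⟩
  · exact (Finset.single_le_sum (fun j _ => hnonneg j) (Finset.self_mem_range_succ i)).trans
      (hsum (i + 1))
  · rw [← h]
    simpa using tsum_mul_twoLevel_div_two_pow k y x 1

theorem memA.twoLevel_eq {α : ℕ → ℝ} (hα : memA β b (twoLevel k y x) α)
    (h : (y + x / 2) / 2 ^ k = 1 / (β * 2 ^ b)) :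
    α k * y + α (k + 1) * x / 2 = (y + x / 2) / 2 := by
  have hsum := hα.2
  rw [tsum_mul_twoLevel_div_two_pow, pow_succ, ← mul_assoc, ← div_div, ← h, div_right_comm] at hsum
  exact (div_left_inj' (by positivity)).1 hsum

theorem Pfun_twoLevel (k : ℕ) (y x : ℝ) (α : ℕ → ℝ) :
    Pfun (twoLevel k y x) α =
      (Real.binEntropy (α k) * y + Real.binEntropy (α (k + 1)) * x -
        Real.binEntropy (α k * y + α (k + 1) * x)) / Real.log 2 := by
  rw [Pfun, (hasSum_mul_twoLevel k y x fun i => binH (α i)).tsum_eq,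
    (hasSum_mul_twoLevel k y x α).tsum_eq]
  simp only [binH_eq_binEntropy_div_log_two]
  ring

theorem Gfun_le_of_twoLevel {M : ℝ} (hy : 0 ≤ y) (hx : 0 ≤ x) (hyx : y + x ≤ 1)
    (h : (y + x / 2) / 2 ^ k = 1 / (β * 2 ^ b))
    (hM : ∀ a₀ ∈ Set.Icc (0 : ℝ) 1, ∀ a₁ ∈ Set.Icc (0 : ℝ) 1,
      a₀ * y + a₁ * x / 2 = (y + x / 2) / 2 →
        Real.binEntropy a₀ * y + Real.binEntropy a₁ * x - Real.binEntropy (a₀ * y + a₁ * x) ≤ M) :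
    Gfun β ≤ M / Real.log 2 := by
  refine (memC_twoLevel hy hx hyx h).Gfun_le fun α hα => ?_
  rw [Pfun_twoLevel]
  exact div_le_div_of_nonneg_right (hM _ (hα.1 k) _ (hα.1 (k + 1)) (hα.twoLevel_eq h))
    (Real.log_nonneg one_le_two)

end TwoLevel

section Bound

open Real
open scoped goldenRatio

variable {β t : ℝ} {k b : ℕ}

theorem exists_div_two_pow_eq (hβ : 0 < β) :
    ∃ t ∈ Set.Icc (1 / 4 : ℝ) (1 / 2), ∃ k b : ℕ, t / 2 ^ k = 1 / (β * 2 ^ b) := by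
  obtain ⟨b, hb⟩ := pow_unbounded_of_one_lt β⁻¹ one_lt_two
  obtain ⟨k, hk, hk'⟩ := exists_nat_pow_near ((inv_lt_iff_one_lt_mul₀' hβ).1 hb).le one_lt_two
  have hpos : 0 < β * 2 ^ b := by positivity
  refine ⟨2 ^ k / (2 * (β * 2 ^ b)), ⟨?_, ?_⟩, k, b + 1, ?_⟩
  · rw [le_div_iff₀ (by positivity)]
    rw [pow_succ] at hk'
    linarith
  · rw [div_le_iff₀ (by positivity)]
    linarith
  · rw [pow_succ]
    field_simp

theorem Gfun_le_of_three_tenths_le (ht : t ∈ Set.Icc (3 / 10 : ℝ) (1 / 2))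
    (htβ : t / 2 ^ k = 1 / (β * 2 ^ b)) : Gfun β ≤ logb 2 (φ / 2) := by
  have ht₀ : 0 < t := by linarith [ht.1]
  refine Gfun_le_of_twoLevel ht₀.le le_rfl (by linarith [ht.2]) (by simpa using htβ)
    fun a₀ _ a₁ _ ha => ?_
  have ha₀ : a₀ = 2⁻¹ := by
    refine mul_right_cancel₀ ht₀.ne' ?_
    linarith
  have hbound := two_mul_log_two_sub_binEntropy_le (p := 2⁻¹ * t)
    ⟨by linarith [ht.1], by linarith [ht.2]⟩
  rw [ha₀, binEntropy_two_inv]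
  simpa [mul_comm t] using hbound

theorem Gfun_le_of_le_three_tenths (ht : t ∈ Set.Icc (1 / 4 : ℝ) (3 / 10))
    (htβ : t / 2 ^ k = 1 / (β * 2 ^ b)) : Gfun β ≤ logb 2 (φ / 2) := by
  obtain ⟨ht₀, ht₁⟩ := ht
  obtain ⟨hφ₀, hφ₁⟩ := goldenRatio_mem_Icc
  -- The solution of `y + x / 2 = t` and `x + φ * y = 1 / 2`, since `(2 - φ)⁻¹ = φ + 1`.
  obtain ⟨y, hy⟩ : ∃ y, y = (2 * t - 1 / 2) * (φ + 1) := ⟨_, rfl⟩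
  obtain ⟨x, hx⟩ : ∃ x, x = 2 * (t - y) := ⟨_, rfl⟩
  have hy₀ : 0 ≤ y := by
    rw [hy]
    exact mul_nonneg (by linarith) (by linarith)
  have hyt : y ≤ t := calc
    y = (2 * t - 1 / 2) * (φ + 1) := hy
    _ ≤ (2 * t - 1 / 2) * 2.6181 := mul_le_mul_of_nonneg_left (by linarith) (by linarith)
    _ ≤ t := by linarith
  have hx₀ : 0 ≤ x := by linarith
  have hyx : y + x ≤ 1 := by linarith
  have hφ : x + φ * y = 1 / 2 := by
    rw [hx, hy]
    linear_combination (2 * t - 1 / 2) * goldenRatio_sq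
  have ht : y + x / 2 = t := by linarith
  exact Gfun_le_of_twoLevel hy₀ hx₀ hyx (by rw [ht, htβ]) fun a₀ h₀ a₁ h₁ ha =>
    binEntropy_mixture_le hx₀ hy₀ hyx hφ h₀ h₁ ha

theorem G_le_neg_log_1236_general (hβ : 0 < β) : Gfun β ≤ logb 2 (φ / 2) := by
  obtain ⟨t, ⟨ht₀, ht₁⟩, k, b, htβ⟩ := exists_div_two_pow_eq hβ
  rcases le_total t (3 / 10) with ht | ht
  · exact Gfun_le_of_le_three_tenths ⟨ht₀, ht⟩ htβ
  · exact Gfun_le_of_three_tenths_le ⟨ht, ht₁⟩ htβ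

end Bound

/-- `G(β) ≤ −log₂(1.236)` for every `β ∈ [1,2)`. -/
theorem G_le_neg_log_1236 (β : ℝ) (hβ : β ∈ Set.Ico (1 : ℝ) 2) :
    Gfun β ≤ -(Real.logb 2 1.236) :=
  (G_le_neg_log_1236_general (zero_lt_one.trans_le hβ.1)).trans logb_goldenRatio_div_two_le
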